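/- Let b₁ and b₂ be nonzero integers. Then g_{(b₁,0)} ≠ h_{(0,b₂)} and g_{(b₁,0)} ≠ j_{(kb₂,b₂)}; i.e. in each case there exists a real u at which the two functions differ. (Elements of ℤ² of type 1 belonging to different subtypes have different classes S.) -/

import Mathlib

noncomputable section

/-- `λ = τ - kσ`, the area parameter of the second section of the Hirzebruch surface. -/
def lamH (k : ℤ) (σ τ : ℝ) : ℝ := τ - (k : ℝ) * σ

/-- First coordinate of the centroid of the moment trapezoid with vertices
`(0,0), (σ,0), (0,τ), (σ,λ)`. -/
def c₁H (k : ℤ) (σ τ : ℝ) : ℝ := σ * (τ + 2 * lamH k σ τ) / (3 * (τ + lamH k σ τ))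

/-- Second coordinate of the centroid of the moment trapezoid. -/
def c₂H (k : ℤ) (σ τ : ℝ) : ℝ :=
  (τ ^ 2 + τ * lamH k σ τ + lamH k σ τ ^ 2) / (3 * (τ + lamH k σ τ))

/-- `q_b = c₁ b₁ + c₂ b₂`. -/
def qH (k : ℤ) (σ τ : ℝ) (b₁ b₂ : ℤ) : ℝ :=
  c₁H k σ τ * (b₁ : ℝ) + c₂H k σ τ * (b₂ : ℝ)

/-- `g_b(u) = u² S_{ψ_b}(u)` for `b = (b₁, 0)` with `b₁ ≠ 0` (subtype (1)α). -/
def gH (k : ℤ) (σ τ : ℝ) (b₁ : ℤ) (u : ℝ) : ℝ :=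
  Real.exp (qH k σ τ b₁ 0 * u) *
    (τ * u / (b₁ : ℝ) - (k : ℝ) / (b₁ : ℝ) ^ 2
      - Real.exp (-(σ * (b₁ : ℝ) * u)) *
          (lamH k σ τ * u / (b₁ : ℝ) - (k : ℝ) / (b₁ : ℝ) ^ 2))

/-- `h_b(u) = u² S_{ψ_b}(u)` for `b = (0, b₂)` with `b₂ ≠ 0` (first kind of subtype (1)β). -/
def hH (k : ℤ) (σ τ : ℝ) (b₂ : ℤ) (u : ℝ) : ℝ :=
  Real.exp (qH k σ τ 0 b₂ * u) *
    (Real.exp (-(τ * (b₂ : ℝ) * u)) / ((k : ℝ) * (b₂ : ℝ) ^ 2)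
      - Real.exp (-(lamH k σ τ * (b₂ : ℝ) * u)) / ((k : ℝ) * (b₂ : ℝ) ^ 2)
      + σ * u / (b₂ : ℝ))

/-- `j_b(u) = u² S_{ψ_b}(u)` for `b = (k b₂, b₂)` with `b₂ ≠ 0` (second kind of
subtype (1)β). -/
def jH (k : ℤ) (σ τ : ℝ) (b₂ : ℤ) (u : ℝ) : ℝ :=
  Real.exp (qH k σ τ (k * b₂) b₂ * u) *
    (1 / ((k : ℝ) * (b₂ : ℝ) ^ 2)
      - Real.exp (-(σ * (k : ℝ) * (b₂ : ℝ) * u)) / ((k : ℝ) * (b₂ : ℝ) ^ 2)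
      - σ * u * Real.exp (-(τ * (b₂ : ℝ) * u)) / (b₂ : ℝ))

end

/-!
An exponential polynomial `∑ₐ pₐ(u) exp (a u)` determines its coefficients `pₐ`: after division by
the exponential of largest frequency `m` every other term tends to zero, so if the sum vanishes
then `pₘ` tends to zero at infinity and is therefore the zero polynomial.

The functions `g`, `h` and `j` are exponential polynomials with coefficients of degree at most one.
In `g` exactly two frequencies carry a coefficient of degree one, in `h` and in `j` only one does.
-/

section

open Asymptotics Filter Polynomial

lemma exp_sub_mul (q c u : ℝ) :
    Real.exp ((q - c) * u) = Real.exp (q * u) * Real.exp (-(c * u)) := by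
  rw [← Real.exp_add, sub_mul, sub_eq_add_neg]

lemma polynomial_isLittleO_exp_pos_mul_atTop (p : ℝ[X]) {b : ℝ} (hb : 0 < b) :
    (fun u => p.eval u) =o[atTop] fun u => Real.exp (b * u) := by
  have p_isBigO : (fun u => p.eval u) =O[atTop] fun u => u ^ p.natDegree := by
    simpa using isBigO_atTop_of_degree_le p (X ^ p.natDegree) (by simp)
  exact p_isBigO.trans_isLittleO (isLittleO_pow_exp_pos_mul_atTop p.natDegree hb)

lemma polynomial_eq_zero_of_mul_isLittleO_self {p : ℝ[X]} {f : ℝ → ℝ} (hf : ∀ u, f u ≠ 0)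
    (hp : (fun u => p.eval u * f u) =o[atTop] f) : p = 0 := by
  have p_tendsto_zero := hp.tendsto_div_nhds_zero
  simp only [mul_div_cancel_right₀ _ (hf _)] at p_tendsto_zero
  exact leadingCoeff_eq_zero.1 (p.tendsto_nhds_iff.1 p_tendsto_zero).1

lemma single_sub_single_ne_single {ι M : Type*} [AddGroup M] {a b : ι} {x y : M}
    (hab : a ≠ b) (hx : x ≠ 0) (hy : y ≠ 0) (c : ι) (z : M) :
    Finsupp.single a x - Finsupp.single b y ≠ Finsupp.single c z := by
  intro h
  have eq_c {i : ι} (hi : (Finsupp.single a x - Finsupp.single b y) i ≠ 0) : i = c :=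
    by_contra fun hic => hi (by rw [h, Finsupp.single_eq_of_ne hic])
  have a_eq_c : a = c := eq_c (by simpa [hab] using hx)
  have b_eq_c : b = c := eq_c (by simpa [hab.symm] using hy)
  exact hab (a_eq_c.trans b_eq_c.symm)

/-- Real exponential polynomials `∑ₐ pₐ(u) exp (a u)`, encoded by the finitely supported family of
the polynomial coefficients `pₐ`, indexed by the frequency `a`. -/
abbrev ExpPoly : Type := ℝ →₀ ℝ[X]

namespace ExpPoly

/-- The function `u ↦ ∑ₐ pₐ(u) exp (a u)` represented by an exponential polynomial. -/
noncomputable def eval : ExpPoly →ₗ[ℝ] ℝ → ℝ :=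
  Finsupp.lsum ℝ fun a => LinearMap.pi fun u => Real.exp (a * u) • leval u

lemma eval_single (a : ℝ) (p : ℝ[X]) (u : ℝ) :
    eval (Finsupp.single a p) u = p.eval u * Real.exp (a * u) := by
  simp [eval, mul_comm]

lemma eval_eq_sum (F : ExpPoly) :
    eval F = ∑ a ∈ F.support, fun u => (F a).eval u * Real.exp (a * u) := by
  ext u
  simp [eval, Finsupp.sum, mul_comm]

lemma isLittleO_eval_exp_mul_atTop {F : ExpPoly} {m : ℝ} (hF : ∀ a ∈ F.support, a < m) :
    eval F =o[atTop] fun u => Real.exp (m * u) := by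
  rw [eval_eq_sum]
  refine IsLittleO.sum fun a ha => ?_
  have coeff_isLittleO := polynomial_isLittleO_exp_pos_mul_atTop (F a) (sub_pos.2 (hF a ha))
  simpa only [← Real.exp_add, ← add_mul, sub_add_cancel] using
    coeff_isLittleO.mul_isBigO (isBigO_refl (fun u => Real.exp (a * u)) atTop)

theorem eq_zero_of_eval_eventuallyEq_zero {F : ExpPoly} (hF : eval F =ᶠ[atTop] 0) : F = 0 := by
  by_contra F_ne_zero
  have support_nonempty := Finsupp.support_nonempty_iff.2 F_ne_zero
  set m := F.support.max' support_nonempty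
  have m_mem : m ∈ F.support := F.support.max'_mem support_nonempty
  have rest_isLittleO : eval (F.erase m) =o[atTop] fun u => Real.exp (m * u) := by
    refine isLittleO_eval_exp_mul_atTop fun a ha => ?_
    rw [Finsupp.support_erase] at ha
    exact F.support.lt_max'_of_mem_erase_max' support_nonempty ha
  have top_eq_neg_rest : (fun u => (F m).eval u * Real.exp (m * u)) =ᶠ[atTop]
      fun u => -eval (F.erase m) u := by
    filter_upwards [hF] with u hu
    rw [← Finsupp.single_add_erase m F, map_add, Pi.add_apply, eval_single] at hu
    exact eq_neg_of_add_eq_zero_left hu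
  exact Finsupp.mem_support_iff.1 m_mem <|
    polynomial_eq_zero_of_mul_isLittleO_self (fun u => Real.exp_ne_zero (m * u)) <|
      rest_isLittleO.neg_left.congr' top_eq_neg_rest.symm .rfl

theorem eval_injective : Function.Injective eval :=
  (injective_iff_map_eq_zero eval).2 fun _ hF =>
    eq_zero_of_eval_eventuallyEq_zero (.of_eq hF)

/-- The family of the linear coefficients: `∑ₐ pₐ(u) exp (a u)` is sent to the coefficients of `X`
in the `pₐ`. -/
noncomputable def linearCoeff : ExpPoly →ₗ[ℝ] ℝ →₀ ℝ :=
  Finsupp.mapRange.linearMap (lcoeff ℝ 1)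

lemma linearCoeff_single (a : ℝ) (p : ℝ[X]) :
    linearCoeff (Finsupp.single a p) = Finsupp.single a (p.coeff 1) := by
  simp [linearCoeff]

end ExpPoly

variable (k : ℤ) (σ τ : ℝ) (b₁ b₂ : ℤ)

/-- `g_{(b₁,0)}` as an exponential polynomial. -/
noncomputable def gExpPoly : ExpPoly :=
  .single (qH k σ τ b₁ 0) (C (τ / b₁) * X - C (k / (b₁ : ℝ) ^ 2)) -
    .single (qH k σ τ b₁ 0 - σ * b₁) (C (lamH k σ τ / b₁) * X - C (k / (b₁ : ℝ) ^ 2))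

/-- `h_{(0,b₂)}` as an exponential polynomial. -/
noncomputable def hExpPoly : ExpPoly :=
  .single (qH k σ τ 0 b₂ - τ * b₂) (C (1 / (k * (b₂ : ℝ) ^ 2))) -
    .single (qH k σ τ 0 b₂ - lamH k σ τ * b₂) (C (1 / (k * (b₂ : ℝ) ^ 2))) +
    .single (qH k σ τ 0 b₂) (C (σ / b₂) * X)

/-- `j_{(k b₂,b₂)}` as an exponential polynomial. -/
noncomputable def jExpPoly : ExpPoly :=
  .single (qH k σ τ (k * b₂) b₂) (C (1 / (k * (b₂ : ℝ) ^ 2))) -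
    .single (qH k σ τ (k * b₂) b₂ - σ * k * b₂) (C (1 / (k * (b₂ : ℝ) ^ 2))) +
    .single (qH k σ τ (k * b₂) b₂ - τ * b₂) (C (-(σ / b₂)) * X)

lemma eval_gExpPoly : (gExpPoly k σ τ b₁).eval = gH k σ τ b₁ := by
  ext u
  simp only [gExpPoly, gH, map_sub, Pi.sub_apply, ExpPoly.eval_single,
    exp_sub_mul, eval_sub, eval_mul, eval_C, eval_X]
  ring

lemma eval_hExpPoly : (hExpPoly k σ τ b₂).eval = hH k σ τ b₂ := by
  ext u
  simp only [hExpPoly, hH, map_add, map_sub, Pi.add_apply, Pi.sub_apply, ExpPoly.eval_single,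
    exp_sub_mul, eval_mul, eval_C, eval_X]
  ring

lemma eval_jExpPoly : (jExpPoly k σ τ b₂).eval = jH k σ τ b₂ := by
  ext u
  simp only [jExpPoly, jH, map_add, map_sub, Pi.add_apply, Pi.sub_apply, ExpPoly.eval_single,
    exp_sub_mul, eval_mul, eval_C, eval_X]
  ring

lemma linearCoeff_gExpPoly :
    (gExpPoly k σ τ b₁).linearCoeff =
      .single (qH k σ τ b₁ 0) (τ / b₁) -
        .single (qH k σ τ b₁ 0 - σ * b₁) (lamH k σ τ / b₁) := by
  simp only [gExpPoly, map_sub, ExpPoly.linearCoeff_single, coeff_sub, coeff_C_mul, coeff_X_one,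
    mul_one, coeff_C_succ, sub_zero]

lemma linearCoeff_hExpPoly :
    (hExpPoly k σ τ b₂).linearCoeff = .single (qH k σ τ 0 b₂) (σ / b₂) := by
  simp only [hExpPoly, map_add, map_sub, ExpPoly.linearCoeff_single, coeff_C_mul, coeff_X_one,
    mul_one, coeff_C_succ, Finsupp.single_zero, sub_zero, zero_add]

lemma linearCoeff_jExpPoly :
    (jExpPoly k σ τ b₂).linearCoeff =
      .single (qH k σ τ (k * b₂) b₂ - τ * b₂) (-(σ / b₂)) := by
  simp only [jExpPoly, map_add, map_sub, ExpPoly.linearCoeff_single, coeff_C_mul, coeff_X_one,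
    mul_one, coeff_C_succ, Finsupp.single_zero, sub_zero, zero_add]

variable {k σ τ b₁}

lemma gH_ne_eval_of_linearCoeff_eq_single (hσ : σ ≠ 0) (hτ : τ ≠ 0) (hlam : lamH k σ τ ≠ 0)
    (hb₁ : b₁ ≠ 0) {F : ExpPoly} {c z : ℝ} (hF : F.linearCoeff = .single c z) :
    gH k σ τ b₁ ≠ F.eval := by
  intro g_eq
  have gExpPoly_eq : gExpPoly k σ τ b₁ = F :=
    ExpPoly.eval_injective ((eval_gExpPoly k σ τ b₁).trans g_eq)
  have b₁_ne_zero : (b₁ : ℝ) ≠ 0 := Int.cast_ne_zero.2 hb₁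
  have frequencies_ne : qH k σ τ b₁ 0 ≠ qH k σ τ b₁ 0 - σ * b₁ :=
    Ne.symm (sub_eq_self.not.2 (mul_ne_zero hσ b₁_ne_zero))
  refine single_sub_single_ne_single frequencies_ne (div_ne_zero hτ b₁_ne_zero)
    (div_ne_zero hlam b₁_ne_zero) c z ?_
  rw [← linearCoeff_gExpPoly, gExpPoly_eq, hF]

end

/-- Proposition 3.12 (Propsubtype) of the paper: type-1 elements of `ℤ²` belonging to different
subtypes have different classes `S`; concretely, for nonzero integers `b₁, b₂` the function
`g_{(b₁,0)}` differs both from `h_{(0,b₂)}` and from `j_{(k b₂, b₂)}`. -/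
theorem hirzebruch_type1_different_subtype
    (k : ℤ) (hk : k ≠ 0) (σ τ : ℝ) (hσ : 0 < σ) (hτ : 0 < τ) (hlam : 0 < lamH k σ τ)
    (b₁ b₂ : ℤ) (hb₁ : b₁ ≠ 0) (hb₂ : b₂ ≠ 0) :
    (∃ u : ℝ, gH k σ τ b₁ u ≠ hH k σ τ b₂ u) ∧
      (∃ u : ℝ, gH k σ τ b₁ u ≠ jH k σ τ b₂ u) := by
  have g_ne {F : ExpPoly} {c z : ℝ} (hF : F.linearCoeff = .single c z) :
      ∃ u, gH k σ τ b₁ u ≠ F.eval u :=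
    Function.ne_iff.1 (gH_ne_eval_of_linearCoeff_eq_single hσ.ne' hτ.ne' hlam.ne' hb₁ hF)
  constructor
  · rw [← eval_hExpPoly]
    exact g_ne (linearCoeff_hExpPoly k σ τ b₂)
  · rw [← eval_jExpPoly]
    exact g_ne (linearCoeff_jExpPoly k σ τ b₂)
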